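/- For every real β ≥ 0, every integer n ≥ 0, and every quaternion q ∈ ℍ, the series Σ_{m=n}^{∞} (n!/Γ(β+m+1)) · Z^{(β)}_{m,n}(q,q̄) · conj(Z^{(β)}_{m,n}(q,q̄)) converges in ℍ, and its sum equals the real scalar E_n^{(β)}(|q|²) (times the identity of ℍ), where for x ≥ 0, E_n^{(β)}(x) := ((1+β)_n/(n!·Γ(β+1))) · Σ_{k=0}^{n} Σ_{k'=0}^{n} [(−n)_k (−n)_{k'} / (k!·k'!·(1+β)_k·(1+β)_{k'})] · x^{k+k'} · Σ_{j=0}^{∞} [(β+n+1)_j / ((β+k+1)_j (β+k'+1)_j)] · x^{j}. -/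

import Mathlib

open Finset Quaternion

/-- Pochhammer symbol `(a)_j = a (a+1) ⋯ (a+j-1)`. -/
noncomputable def poch (a : ℝ) (j : ℕ) : ℝ := ∏ i ∈ Finset.range j, (a + i)

/-- The quaternionic 2D Laguerre polynomial `Z^{(β)}_{m,n}(q,q̄)` (for `m ≥ n`). -/
noncomputable def Zq (β : ℝ) (m n : ℕ) (q : ℍ[ℝ]) : ℍ[ℝ] :=
  ∑ k ∈ Finset.range (n + 1),
    ((-1 : ℝ) ^ (n - k) * poch (β + 1) m /
        (k.factorial * (n - k).factorial * poch (β + 1) (m - k))) •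
      (q ^ (m - k) * (star q) ^ (n - k))

/-- The sum `E_n^{(β)}(x)`, expressed via the terminating double sum with inner `₂F₂` series. -/
noncomputable def Efn (β : ℝ) (n : ℕ) (x : ℝ) : ℝ :=
  (poch (1 + β) n / (n.factorial * Real.Gamma (β + 1))) *
    ∑ k ∈ Finset.range (n + 1), ∑ k' ∈ Finset.range (n + 1),
      poch (-(n : ℝ)) k * poch (-(n : ℝ)) k' /
          (k.factorial * k'.factorial * poch (1 + β) k * poch (1 + β) k') *
        x ^ (k + k') *
        ∑' j : ℕ, poch (β + n + 1) j / (poch (β + k + 1) j * poch (β + k' + 1) j) * x ^ j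

/-!
Since `q` and `q̄` commute with product `|q|²`, the polynomial `Z^{(β)}_{n+j,n}(q,q̄)` equals
`L_n^{(β+j)}(|q|²) q^j` for the generalised Laguerre polynomial `L_n^{(α)}`, and `Z · conj Z` is the
real number `L_n^{(β+j)}(|q|²)² |q|^{2j}`. Writing `L_n^{(β+j)}` in its `₁F₁` form, the dependence
on `j` sits in ratios of Pochhammer symbols `(β+n+1)_j / (β+k+1)_j`. Squaring turns the series over
`j` into a finite double sum of `₂F₂` series, each of which converges by the ratio test.
-/

open Filter Topology

lemma poch_eq_ascPochhammer_eval (a : ℝ) (j : ℕ) : poch a j = (ascPochhammer ℝ j).eval a := by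
  induction j with
  | zero => simp [poch]
  | succ j ih => rw [ascPochhammer_succ_eval, ← ih, poch, poch, prod_range_succ]

lemma poch_zero (a : ℝ) : poch a 0 = 1 :=
  prod_range_zero _

lemma poch_succ (a : ℝ) (j : ℕ) : poch a (j + 1) = poch a j * (a + j) :=
  prod_range_succ _ _

lemma poch_add (a : ℝ) (m j : ℕ) : poch a (m + j) = poch a m * poch (a + m) j := by
  simp only [poch, prod_range_add, Nat.cast_add, add_assoc]

lemma poch_mul_poch_comm (a : ℝ) (m j : ℕ) :
    poch a m * poch (a + m) j = poch a j * poch (a + j) m := by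
  rw [← poch_add, add_comm m, poch_add]

lemma poch_neg_natCast {n k : ℕ} (hk : k ≤ n) :
    poch (-(n : ℝ)) k = (-1) ^ k * n.factorial / (n - k).factorial := by
  have hfact : ((n - k).factorial : ℝ) ≠ 0 := by positivity
  rw [poch_eq_ascPochhammer_eval, ascPochhammer_eval_neg_eq_descPochhammer,
    descPochhammer_eval_eq_descFactorial, ← Nat.factorial_mul_descFactorial hk, Nat.cast_mul]
  field_simp

lemma poch_ne_zero {a : ℝ} (ha : ∀ m : ℕ, a ≠ -m) (j : ℕ) : poch a j ≠ 0 :=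
  prod_ne_zero_iff.mpr fun i _ => mt eq_neg_of_add_eq_zero_left (ha i)

lemma Gamma_add_natCast {a : ℝ} (ha : ∀ m : ℕ, a ≠ -m) (j : ℕ) :
    Real.Gamma (a + j) = Real.Gamma a * poch a j := by
  induction j with
  | zero => simp [poch_zero]
  | succ j ih =>
    have hj : a + j ≠ 0 := mt eq_neg_of_add_eq_zero_left (ha j)
    rw [Nat.cast_succ, ← add_assoc, Real.Gamma_add_one hj, ih, poch_succ]
    ring

lemma tendsto_add_div_add_mul_add_atTop (a b c : ℝ) :
    Tendsto (fun j : ℕ => (a + j) / ((b + j) * (c + j))) atTop (𝓝 0) := by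
  have hquot : Tendsto (fun j : ℕ => (a + j) / (b + j)) atTop (𝓝 1) := by
    simpa using tendsto_add_mul_div_add_mul_atTop_nhds a b (1 : ℝ) one_ne_zero
  have hinv : Tendsto (fun j : ℕ => (c + j)⁻¹) atTop (𝓝 0) :=
    (tendsto_atTop_add_const_left _ c tendsto_natCast_atTop_atTop).inv_tendsto_atTop
  simpa only [← div_eq_mul_inv, div_div, mul_zero] using hquot.mul hinv

lemma summable_poch_div_poch_mul_poch (a b c x : ℝ) :
    Summable fun j : ℕ => poch a j / (poch b j * poch c j) * x ^ j := by
  have hratio : ∀ᶠ j : ℕ in atTop, ‖(a + j) / ((b + j) * (c + j)) * x‖ ≤ 1 / 2 :=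
    ((tendsto_add_div_add_mul_add_atTop a b c).mul_const x).norm.eventually_le_const (by simp)
  refine summable_of_ratio_norm_eventually_le one_half_lt_one ?_
  filter_upwards [hratio] with j hj
  have hsucc : poch a (j + 1) / (poch b (j + 1) * poch c (j + 1)) * x ^ (j + 1) =
      (a + j) / ((b + j) * (c + j)) * x * (poch a j / (poch b j * poch c j) * x ^ j) := by
    simp only [poch_succ, pow_succ, mul_mul_mul_comm (poch b j), mul_div_mul_comm]
    ring
  rw [hsucc, norm_mul]
  gcongr

/-- The generalised Laguerre polynomial `L_n^{(α)}(x)`, encoded as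
`(α+1)_n / n! · ₁F₁(-n; α+1; x)`; this needs `α` not to be a negative integer. -/
noncomputable def laguerre (α : ℝ) (n : ℕ) (x : ℝ) : ℝ :=
  poch (α + 1) n / n.factorial *
    ∑ k ∈ range (n + 1), poch (-(n : ℝ)) k / (k.factorial * poch (α + 1) k) * x ^ k

lemma laguerre_add_natCast {β : ℝ} (hβ : ∀ m : ℕ, β + 1 ≠ -m) (n j : ℕ) (x : ℝ) :
    laguerre (β + j) n x = poch (β + 1) n * poch (β + n + 1) j / n.factorial *
      ∑ k ∈ range (n + 1),
        poch (-(n : ℝ)) k / (k.factorial * poch (β + 1) k * poch (β + k + 1) j) * x ^ k := by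
  have hj := poch_ne_zero hβ j
  have hswap (k : ℕ) :
      poch (β + j + 1) k = poch (β + 1) k * poch (β + k + 1) j / poch (β + 1) j := by
    rw [eq_div_iff hj, mul_comm, add_right_comm β, add_right_comm β k, poch_mul_poch_comm]
  rw [laguerre, mul_sum, mul_sum]
  refine sum_congr rfl fun k _ => ?_
  rw [hswap n, hswap k]
  field_simp

lemma Zq_eq_laguerre_smul_pow {β : ℝ} (hβ : ∀ m : ℕ, β + 1 ≠ -m) (n j : ℕ) (q : ℍ[ℝ]) :
    Zq β (n + j) n q = laguerre (β + j) n (normSq q) • q ^ j := by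
  rw [Zq, ← sum_range_reflect, laguerre, mul_sum, sum_smul]
  refine sum_congr rfl fun k hk => ?_
  have hkn : k ≤ n := Nat.lt_succ_iff.mp (mem_range.mp hk)
  have hmonomial : q ^ (j + k) * star q ^ k = normSq q ^ k • q ^ j := by
    have hcomm : Commute q (star q) := (star_comm_self' q).symm
    rw [pow_add, mul_assoc, ← hcomm.mul_pow, self_mul_star, ← Quaternion.coe_pow, mul_coe_eq_smul]
  have hcoeff : (-1) ^ k * poch (β + 1) (n + j) /
        ((n - k).factorial * k.factorial * poch (β + 1) (j + k)) =
      poch (β + j + 1) n / n.factorial *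
        (poch (-(n : ℝ)) k / (k.factorial * poch (β + j + 1) k)) := by
    have hj := poch_ne_zero hβ j
    rw [poch_neg_natCast hkn, add_comm n, poch_add, poch_add, add_right_comm β 1]
    field_simp
  rw [Nat.add_sub_cancel, Nat.sub_sub_self hkn, show n + j - (n - k) = j + k by omega,
    hmonomial, hcoeff, smul_smul, mul_assoc]

lemma Zq_mul_star_self {β : ℝ} (hβ : ∀ m : ℕ, β + 1 ≠ -m) (n j : ℕ) (q : ℍ[ℝ]) :
    Zq β (n + j) n q * star (Zq β (n + j) n q) =
      (laguerre (β + j) n (normSq q) ^ 2 * normSq q ^ j) • (1 : ℍ[ℝ]) := by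
  rw [self_mul_star, Zq_eq_laguerre_smul_pow hβ, normSq_smul, map_pow, ← coe_mul_eq_smul, mul_one]

lemma factorial_div_Gamma_mul_laguerre_sq {β : ℝ} (hβ : ∀ m : ℕ, β + 1 ≠ -m)
    (n j : ℕ) (x : ℝ) :
    n.factorial / Real.Gamma (β + (n + j) + 1) * (laguerre (β + j) n x ^ 2 * x ^ j) =
      poch (1 + β) n / (n.factorial * Real.Gamma (β + 1)) *
        ∑ k ∈ range (n + 1), ∑ k' ∈ range (n + 1),
          poch (-(n : ℝ)) k * poch (-(n : ℝ)) k' /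
              (k.factorial * k'.factorial * poch (1 + β) k * poch (1 + β) k') *
            x ^ (k + k') *
            (poch (β + n + 1) j / (poch (β + k + 1) j * poch (β + k' + 1) j) * x ^ j) := by
  have hGamma : Real.Gamma (β + (n + j) + 1) =
      Real.Gamma (β + 1) * (poch (β + 1) n * poch (β + n + 1) j) := by
    rw [add_right_comm, add_right_comm β n, ← poch_add, ← Gamma_add_natCast hβ, Nat.cast_add]
  have hprefactor : n.factorial / Real.Gamma (β + (n + j) + 1) *
        (poch (β + 1) n * poch (β + n + 1) j / n.factorial) ^ 2 =
      poch (1 + β) n / (n.factorial * Real.Gamma (β + 1)) * poch (β + n + 1) j := by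
    have hn := poch_ne_zero hβ n
    have hnj : poch (β + n + 1) j ≠ 0 := by
      rw [add_right_comm]
      exact right_ne_zero_of_mul (poch_add _ n j ▸ poch_ne_zero hβ (n + j))
    rw [hGamma, add_comm 1 β]
    field_simp
  rw [laguerre_add_natCast hβ, mul_pow, mul_assoc (_ ^ 2), ← mul_assoc, hprefactor, mul_assoc, sq,
    sum_mul_sum]
  simp only [sum_mul, mul_sum]
  refine sum_congr rfl fun k _ => sum_congr rfl fun k' _ => ?_
  rw [add_comm 1 β]
  ring

lemma hasSum_laguerre_sq {β : ℝ} (hβ : ∀ m : ℕ, β + 1 ≠ -m) (n : ℕ) (x : ℝ) :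
    HasSum (fun j : ℕ =>
        n.factorial / Real.Gamma (β + (n + j) + 1) * (laguerre (β + j) n x ^ 2 * x ^ j))
      (Efn β n x) := by
  simp only [factorial_div_Gamma_mul_laguerre_sq hβ]
  exact (hasSum_sum fun k _ => hasSum_sum fun k' _ =>
    (summable_poch_div_poch_mul_poch _ _ _ x).hasSum.mul_left _).mul_left _

theorem laguerre2D_quat_summation_general (β : ℝ) (hβ : ∀ m : ℕ, β + 1 ≠ -m) (n : ℕ)
    (q : ℍ[ℝ]) :
    (∀ k k' : ℕ, Summable (fun j : ℕ =>
      poch (β + n + 1) j / (poch (β + k + 1) j * poch (β + k' + 1) j) *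
        Quaternion.normSq q ^ j)) ∧
    HasSum
      (fun j : ℕ =>
        ((n.factorial : ℝ) / Real.Gamma (β + (n + j) + 1)) •
          (Zq β (n + j) n q * star (Zq β (n + j) n q)))
      ((Efn β n (Quaternion.normSq q)) • (1 : ℍ[ℝ])) := by
  refine ⟨fun k k' => summable_poch_div_poch_mul_poch _ _ _ _, ?_⟩
  simp only [Zq_mul_star_self hβ, smul_smul]
  exact (hasSum_laguerre_sq hβ n (normSq q)).smul_const 1

/-- Quaternionic summation formula:
`Σ_{m=n}^∞ (n!/Γ(β+m+1)) Z^{(β)}_{m,n}(q,q̄) conj(Z^{(β)}_{m,n}(q,q̄)) = E_n^{(β)}(|q|²) · 1`,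
with the inner hypergeometric series converging for all arguments. -/
theorem laguerre2D_quat_summation (β : ℝ) (hβ : 0 ≤ β) (n : ℕ) (q : ℍ[ℝ]) :
    (∀ k k' : ℕ, Summable (fun j : ℕ =>
      poch (β + n + 1) j / (poch (β + k + 1) j * poch (β + k' + 1) j) *
        Quaternion.normSq q ^ j)) ∧
    HasSum
      (fun j : ℕ =>
        ((n.factorial : ℝ) / Real.Gamma (β + (n + j) + 1)) •
          (Zq β (n + j) n q * star (Zq β (n + j) n q)))
      ((Efn β n (Quaternion.normSq q)) • (1 : ℍ[ℝ])) := by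
  have hβ' (m : ℕ) : β + 1 ≠ -m := by linarith [m.cast_nonneg (α := ℝ)]
  exact laguerre2D_quat_summation_general β hβ' n q
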